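/- If a finite topological space X has a greatest element in its specialization preorder (a unique maximal point x with y ≤ x for all y), or a least element (a unique minimal point x with x ≤ y for all y), then X is contractible. -/

import Mathlib

/-!
If two continuous maps `f g : X → Y` satisfy `f x ⤳ g x` for all `x`, then they are homotopic: the
function `[0, 1] × X → Y` equal to `f` for `t < 1` and to `g` at `t = 1` is continuous, since
`t < 1` is an open condition. A greatest (resp. least) point `x` of the specialization preorder is
one with `y ⤳ x` (resp. `x ⤳ y`) for all `y`, so the identity is comparable, hence homotopic, to the
constant map at `x`.
-/

/-- The minimal neighborhood of a point: the intersection of all open sets containing it. -/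
def minNbhd {X : Type*} [TopologicalSpace X] (x : X) : Set X :=
  ⋂₀ {U : Set X | IsOpen U ∧ x ∈ U}

theorem mem_minNbhd_iff_specializes {X : Type*} [TopologicalSpace X] {x y : X} :
    y ∈ minNbhd x ↔ y ⤳ x := by
  simp [minNbhd, specializes_iff_forall_open]

theorem homotopic_of_forall_specializes {X Y : Type*} [TopologicalSpace X] [TopologicalSpace Y]
    (f g : C(X, Y)) (h : ∀ x, f x ⤳ g x) : f.Homotopic g := by
  classical
  let s : Set (unitInterval × X) := {p | p.1 < 1}
  have hs : IsOpen s := isOpen_lt continuous_fst continuous_const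
  exact ⟨{
    toFun := s.piecewise (fun p ↦ f p.2) (fun p ↦ g p.2)
    continuous_toFun := hs.continuous_piecewise_of_specializes
      (f.continuous.comp continuous_snd) (g.continuous.comp continuous_snd) fun p ↦ h p.2
    map_zero_left := fun x ↦ by simp [s, Set.piecewise]
    map_one_left := fun x ↦ by simp [s, Set.piecewise] }⟩

theorem stmt10 {X : Type*} [TopologicalSpace X] [Finite X] (x : X)
    (h : (∀ y : X, y ∈ minNbhd x) ∨ (∀ y : X, x ∈ minNbhd y)) :
    ContractibleSpace X := by
  simp only [mem_minNbhd_iff_specializes] at h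
  refine (contractible_iff_id_nullhomotopic X).2 ⟨x, ?_⟩
  rcases h with h | h
  · exact homotopic_of_forall_specializes _ _ h
  · exact (homotopic_of_forall_specializes (ContinuousMap.const X x) (ContinuousMap.id X) h).symm
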